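/- For every fixed integer n ≥ 2 and every integer d with 1 ≤ d ≤ ⌊n/2⌋ − 1, the polynomials g_{n,d}(t) and g_{n,d+1}(t) have only real zeros and g_{n,d}(t) interlaces g_{n,d+1}(t), i.e. g_{n,d} ⪯ g_{n,d+1}; consequently, the sequence {g_{n,d}(t)}_{d=1}^{⌊n/2⌋} is a generalized Sturm sequence. -/

import Mathlib

open Polynomial

/-- Speyer's g-polynomial of the uniform matroid `U_{n,d}` as a real polynomial:
`g_{n,d}(t) = Σ_{i=1}^{min(d, n-d)} ((n-i-1)! / ((d-i)! (n-d-i)! (i-1)!)) t^i`.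
When `d = 0` or `d = n` the sum is empty, so `gPoly n d = 0`, matching the convention. -/
noncomputable def gPoly (n d : ℕ) : Polynomial ℝ :=
  ∑ i ∈ Finset.Icc 1 (min d (n - d)),
    C ((Nat.factorial (n - i - 1) : ℝ) /
        ((Nat.factorial (d - i) : ℝ) * (Nat.factorial (n - d - i) : ℝ) *
          (Nat.factorial (i - 1) : ℝ))) * X ^ i

/-- A real polynomial is real-rooted (has only real zeros) if its number of real roots,
counted with multiplicity, equals its degree. -/
def RealRooted (f : Polynomial ℝ) : Prop :=
  Multiset.card f.roots = f.natDegree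

/-- The real roots of `f`, with multiplicity, listed in increasing order. -/
noncomputable def ascRoots (f : Polynomial ℝ) : List ℝ :=
  f.roots.sort (· ≤ ·)

/-- `Interlaces g f` means `g ⪯ f`: both polynomials are real-rooted and, writing the
roots of `f` in decreasing order as `α_1 ≥ α_2 ≥ ⋯` and those of `g` as `β_1 ≥ β_2 ≥ ⋯`
(equivalently, in increasing order as `a_1 ≤ ⋯ ≤ a_m` and `b_1 ≤ ⋯`), either
`deg f = deg g = m` and `β_m ≤ α_m ≤ β_{m-1} ≤ ⋯ ≤ β_1 ≤ α_1`
(i.e. `b_1 ≤ a_1 ≤ b_2 ≤ a_2 ≤ ⋯ ≤ b_m ≤ a_m`), or `deg f = deg g + 1 = m` and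
`α_m ≤ β_{m-1} ≤ α_{m-1} ≤ ⋯ ≤ β_1 ≤ α_1` (i.e. `a_1 ≤ b_1 ≤ a_2 ≤ ⋯ ≤ b_{m-1} ≤ a_m`);
by convention `0 ⪯ f` and `f ⪯ 0` for any real-rooted `f` (and the convention
`a ⪯ bt + c` for constants is subsumed by the two degree cases, whose conditions are
then vacuous). -/
def Interlaces (g f : Polynomial ℝ) : Prop :=
  RealRooted g ∧ RealRooted f ∧
    (g = 0 ∨ f = 0 ∨
      (f.natDegree = g.natDegree ∧
        (∀ i < f.natDegree, (ascRoots g).getD i 0 ≤ (ascRoots f).getD i 0) ∧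
        (∀ i, i + 1 < f.natDegree → (ascRoots f).getD i 0 ≤ (ascRoots g).getD (i + 1) 0)) ∨
      (f.natDegree = g.natDegree + 1 ∧
        (∀ i < g.natDegree, (ascRoots f).getD i 0 ≤ (ascRoots g).getD i 0) ∧
        (∀ i < g.natDegree, (ascRoots g).getD i 0 ≤ (ascRoots f).getD (i + 1) 0)))

/-!
Dividing `g_{n,d}` by `t` leaves, up to sign, the Jacobi polynomial `P_{d-1}^{(1-n,0)}(1 + 2t)`, so
for fixed `n` these quotients satisfy a three-term recurrence `E r = s q - F p` in the degree. As
long as `d ≤ n / 2`, both `E` and `F` are positive, and Sturm's argument applies: at a root of `q`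
the signs of `p` and `r` are opposite, so if the roots of `p` strictly separate those of `q`, then
`r` changes sign between consecutive roots of `q` and beyond the extreme ones, and the roots of `q`
strictly separate those of `r`. The coefficients being nonnegative, all these roots are negative,
and multiplying by `t` only appends the common largest root `0`.
-/

section Tuples

variable {α : Type*} {k : ℕ}

/-- The tuples satisfy `a₀ < b₀ < a₁ < ⋯ < b_{k-1} < a_k`: a strict form of interlacing, for
tuples of roots listed in increasing order. -/
def StrictlyInterlaces [Preorder α] (b : Fin k → α) (a : Fin (k + 1) → α) : Prop :=
  ∀ i, a i.castSucc < b i ∧ b i < a i.succ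

namespace StrictlyInterlaces

variable [Preorder α] {b : Fin k → α} {a : Fin (k + 1) → α}

theorem strictMono_right (h : StrictlyInterlaces b a) : StrictMono a :=
  Fin.strictMono_iff_lt_succ.mpr fun i ↦ (h i).1.trans (h i).2

theorem lt_of_castSucc_lt (h : StrictlyInterlaces b a) {i : Fin k} {j : Fin (k + 1)}
    (hij : i.castSucc < j) : b i < a j :=
  (h i).2.trans_le (h.strictMono_right.monotone (Fin.castSucc_lt_iff_succ_le.mp hij))

theorem lt_of_le_castSucc (h : StrictlyInterlaces b a) {i : Fin k} {j : Fin (k + 1)}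
    (hij : j ≤ i.castSucc) : a j < b i :=
  (h.strictMono_right.monotone hij).trans_lt (h i).1

end StrictlyInterlaces

theorem strictMono_snoc [Preorder α] {a : Fin k → α} {x : α} (ha : StrictMono a)
    (hx : ∀ i, a i < x) : StrictMono (Fin.snoc a x : Fin (k + 1) → α) := by
  intro i j hij
  obtain ⟨i, rfl⟩ := Fin.exists_castSucc_eq.mpr (hij.trans_le (Fin.le_last j)).ne
  induction j using Fin.lastCases with
  | last => simpa using hx i
  | cast j => simpa using ha (Fin.castSucc_lt_castSucc_iff.mp hij)

end Tuples

theorem neg_one_pow_mul_prod_sub_pos {R : Type*} [CommRing R] [LinearOrder R]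
    [IsStrictOrderedRing R] {m j : ℕ} {a : Fin m → R} {x : R} (hj : j ≤ m)
    (hlt : ∀ i : Fin m, i < j → a i < x) (hgt : ∀ i : Fin m, j ≤ i → x < a i) :
    0 < (-1) ^ (m + j) * ∏ i, (x - a i) := by
  induction m with
  | zero => simp [Nat.le_zero.mp hj]
  | succ m ih =>
    rcases hj.eq_or_lt with rfl | hj
    · rw [Even.neg_one_pow ⟨_, rfl⟩, one_mul]
      exact Finset.prod_pos fun i _ ↦ sub_pos.mpr (hlt i i.isLt)
    · have hj := Nat.lt_succ_iff.mp hj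
      have hinit := ih (a := a ∘ Fin.castSucc) hj (fun i ↦ hlt i.castSucc) fun i ↦ hgt i.castSucc
      have hlast : 0 < a (Fin.last m) - x := sub_pos.mpr (hgt (Fin.last m) hj)
      calc 0 < ((-1) ^ (m + j) * ∏ i : Fin m, (x - a i.castSucc)) * (a (Fin.last m) - x) :=
            mul_pos hinit hlast
        _ = (-1) ^ (m + 1 + j) * ∏ i, (x - a i) := by rw [Fin.prod_univ_castSucc]; ring

theorem neg_of_isRoot_of_coeff_nonneg {R : Type*} [CommRing R] [LinearOrder R]
    [IsStrictOrderedRing R] {f : R[X]} (hnonneg : ∀ i, 0 ≤ f.coeff i) (hzero : 0 < f.coeff 0)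
    {x : R} (hx : f.IsRoot x) : x < 0 := by
  by_contra! hx0
  refine hx.eq_zero.not_gt (hzero.trans_le ?_)
  calc f.coeff 0 = f.coeff 0 * x ^ 0 := by simp
    _ ≤ ∑ i ∈ Finset.range (f.natDegree + 1), f.coeff i * x ^ i :=
      Finset.single_le_sum (f := fun i ↦ f.coeff i * x ^ i)
        (fun i _ ↦ mul_nonneg (hnonneg i) (pow_nonneg hx0 i)) (by simp)
    _ = f.eval x := (eval_eq_sum_range x).symm

theorem eventually_atTop_eval_pos {f : ℝ[X]} (hdeg : 0 < f.natDegree)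
    (hlc : 0 < f.leadingCoeff) : ∀ᶠ x in Filter.atTop, 0 < f.eval x :=
  (f.tendsto_atTop_of_leadingCoeff_nonneg (natDegree_pos_iff_degree_pos.mp hdeg)
    hlc.le).eventually_gt_atTop 0

theorem eventually_atBot_neg_one_pow_mul_eval_pos {f : ℝ[X]} (hdeg : 0 < f.natDegree)
    (hlc : 0 < f.leadingCoeff) :
    ∀ᶠ x in Filter.atBot, 0 < (-1) ^ f.natDegree * f.eval x := by
  have hreflect : (C ((-1) ^ f.natDegree) * f.comp (-X)).natDegree = f.natDegree := by
    rw [natDegree_C_mul (by simp), natDegree_comp, natDegree_neg, natDegree_X, mul_one]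
  have hpos := eventually_atTop_eval_pos (f := C ((-1) ^ f.natDegree) * f.comp (-X))
    (by rwa [hreflect]) (by
      rw [leadingCoeff_mul, leadingCoeff_C, leadingCoeff_comp (by simp), leadingCoeff_neg,
        leadingCoeff_X, mul_left_comm, ← mul_pow]
      simpa using hlc)
  filter_upwards [Filter.tendsto_neg_atBot_atTop.eventually hpos] with x hx
  simpa using hx

theorem exists_isRoot_of_eval_mul_eval_neg {f : ℝ[X]} {x y : ℝ} (hxy : x ≤ y)
    (h : f.eval x * f.eval y < 0) : ∃ z ∈ Set.Ioo x y, f.IsRoot z := by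
  rcases mul_neg_iff.mp h with ⟨hx, hy⟩ | ⟨hx, hy⟩
  · exact intermediate_value_Ioo' hxy f.continuous.continuousOn ⟨hy, hx⟩
  · exact intermediate_value_Ioo hxy f.continuous.continuousOn ⟨hx, hy⟩

/-- The polynomial `f` has positive leading coefficient and its roots are exactly the
`a 0 < a 1 < ⋯ < a (m - 1)`, all of them simple. Indexing the roots by `Fin m` lets interlacing be
stated, and signs between roots be read off, by index; simplicity and completeness of the list are
encoded by `natDegree_eq`. -/
structure HasSimpleRoots {R : Type*} [Ring R] [Preorder R] {m : ℕ} (f : R[X]) (a : Fin m → R) :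
    Prop where
  natDegree_eq : f.natDegree = m
  leadingCoeff_pos : 0 < f.leadingCoeff
  strictMono : StrictMono a
  isRoot : ∀ i, f.IsRoot (a i)

namespace HasSimpleRoots

variable {m : ℕ}

theorem ne_zero {R : Type*} [Ring R] [Preorder R] {f : R[X]} {a : Fin m → R}
    (h : HasSimpleRoots f a) : f ≠ 0 :=
  leadingCoeff_ne_zero.mp h.leadingCoeff_pos.ne'

variable {R : Type*} [CommRing R] [LinearOrder R] [IsStrictOrderedRing R]

theorem roots_eq {f : R[X]} {a : Fin m → R} (h : HasSimpleRoots f a) :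
    f.roots = List.ofFn a := by
  rw [← Fin.univ_val_map]
  exact roots_eq_of_natDegree_le_card_of_ne_zero
    (S := Finset.univ.map ⟨a, h.strictMono.injective⟩) (by simpa using h.isRoot)
    (by simp [h.natDegree_eq]) h.ne_zero

theorem eq_C_mul_prod {f : R[X]} {a : Fin m → R} (h : HasSimpleRoots f a) :
    f = C f.leadingCoeff * ∏ i, (X - C (a i)) := by
  have hcard : Multiset.card f.roots = f.natDegree := by simp [h.roots_eq, h.natDegree_eq]
  conv_lhs => rw [← C_leadingCoeff_mul_prod_multiset_X_sub_C hcard, h.roots_eq]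
  simp [List.prod_ofFn, Function.comp_def]

theorem neg_one_pow_mul_eval_pos {f : R[X]} {a : Fin m → R} (h : HasSimpleRoots f a) {x : R}
    {j : ℕ} (hj : j ≤ m) (hlt : ∀ i : Fin m, i < j → a i < x)
    (hgt : ∀ i : Fin m, j ≤ i → x < a i) : 0 < (-1) ^ (m + j) * f.eval x := by
  have heval : f.eval x = f.leadingCoeff * ∏ i, (x - a i) := by
    conv_lhs => rw [h.eq_C_mul_prod]
    simp [eval_prod]
  rw [heval, mul_left_comm]
  exact mul_pos h.leadingCoeff_pos (neg_one_pow_mul_prod_sub_pos hj hlt hgt)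

theorem X_mul {f : R[X]} {a : Fin m → R} (h : HasSimpleRoots f a) (ha : ∀ i, a i < 0) :
    HasSimpleRoots (X * f) (Fin.snoc a 0 : Fin (m + 1) → R) where
  natDegree_eq := by rw [natDegree_X_mul h.ne_zero, h.natDegree_eq]
  leadingCoeff_pos := by simpa using h.leadingCoeff_pos
  strictMono := strictMono_snoc h.strictMono ha
  isRoot := Fin.lastCases (by simp) fun i ↦ by simp [(h.isRoot i).eq_zero]

theorem realRooted {f : ℝ[X]} {a : Fin m → ℝ} (h : HasSimpleRoots f a) : RealRooted f := by
  simp [RealRooted, h.roots_eq, h.natDegree_eq]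

theorem ascRoots_eq {f : ℝ[X]} {a : Fin m → ℝ} (h : HasSimpleRoots f a) :
    ascRoots f = List.ofFn a := by
  rw [ascRoots, h.roots_eq, Multiset.coe_sort]
  exact List.mergeSort_eq_self _ h.strictMono.monotone.sortedLE_ofFn.pairwise

theorem interlaces {p q : ℝ[X]} {b : Fin m → ℝ} {a : Fin (m + 1) → ℝ} (hp : HasSimpleRoots p b)
    (hq : HasSimpleRoots q a) (hba : ∀ i, a i.castSucc ≤ b i ∧ b i ≤ a i.succ) :
    Interlaces p q := by
  refine ⟨hp.realRooted, hq.realRooted, .inr <| .inr <| .inr ⟨?_, ?_⟩⟩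
  · rw [hp.natDegree_eq, hq.natDegree_eq]
  · rw [hp.natDegree_eq, hp.ascRoots_eq, hq.ascRoots_eq, ← forall₂_and]
    intro i hi
    simpa [List.getD_eq_getElem, hi, hi.le, -List.ofFn_succ] using hba ⟨i, hi⟩

theorem interlaces_X_mul {p q : ℝ[X]} {b : Fin m → ℝ} {a : Fin (m + 1) → ℝ}
    (hp : HasSimpleRoots p b) (hq : HasSimpleRoots q a) (hba : StrictlyInterlaces b a)
    (ha : ∀ i, a i < 0) : Interlaces (X * p) (X * q) := by
  have hb : ∀ i, b i < 0 := fun i ↦ (hba i).2.trans (ha i.succ)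
  refine (hp.X_mul hb).interlaces (hq.X_mul ha) (Fin.lastCases ?_ fun i ↦ ?_)
  · simpa [Fin.succ_last] using (ha (Fin.last m)).le
  · rw [Fin.succ_castSucc]
    simpa only [Fin.snoc_castSucc] using ⟨(hba i).1.le, (hba i).2.le⟩

end HasSimpleRoots

theorem exists_isRoot_between_of_alternating {f : ℝ[X]} {m : ℕ} {x : Fin (m + 1) → ℝ}
    (hx : StrictMono x) (hsign : ∀ i : Fin (m + 1), 0 < (-1) ^ (m + (i : ℕ)) * f.eval (x i)) :
    ∃ c : Fin m → ℝ, StrictlyInterlaces c x ∧ ∀ i, f.IsRoot (c i) := by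
  have hneg (i : Fin m) : f.eval (x i.castSucc) * f.eval (x i.succ) < 0 := by
    have hprod := mul_pos (hsign i.castSucc) (hsign i.succ)
    have hpow : (-1 : ℝ) ^ (m + (i : ℕ)) * (-1) ^ (m + ((i : ℕ) + 1)) = -1 := by
      rw [← pow_add]
      exact Odd.neg_one_pow ⟨m + i, by ring⟩
    rw [mul_mul_mul_comm, Fin.val_castSucc, Fin.val_succ, hpow] at hprod
    linarith
  choose c hc hroot using fun i : Fin m ↦
    exists_isRoot_of_eval_mul_eval_neg (hx.monotone i.castSucc_lt_succ.le) (hneg i)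
  exact ⟨c, hc, hroot⟩

theorem exists_hasSimpleRoots_of_alternating {f : ℝ[X]} {m : ℕ} {a : Fin m → ℝ}
    (hdeg : f.natDegree = m + 1) (hlc : 0 < f.leadingCoeff) (ha : StrictMono a)
    (hsign : ∀ i : Fin m, 0 < (-1) ^ (m + (i : ℕ)) * f.eval (a i)) :
    ∃ c, HasSimpleRoots f c ∧ StrictlyInterlaces a c := by
  obtain ⟨U, hU, hUpos⟩ : ∃ U, (∀ i, a i < U) ∧ 0 < f.eval U :=
    ((Filter.eventually_all.mpr fun i ↦ Filter.eventually_gt_atTop (a i)).and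
      (eventually_atTop_eval_pos (by omega) hlc)).exists
  obtain ⟨L, hLU, hL, hLpos⟩ : ∃ L, L < U ∧ (∀ i, L < a i) ∧ 0 < (-1) ^ f.natDegree * f.eval L :=
    ((Filter.eventually_lt_atBot U).and
      ((Filter.eventually_all.mpr fun i ↦ Filter.eventually_lt_atBot (a i)).and
        (eventually_atBot_neg_one_pow_mul_eval_pos (by omega) hlc))).exists
  have hx : StrictMono (Fin.cons L (Fin.snoc a U : Fin (m + 1) → ℝ) : Fin (m + 2) → ℝ) :=
    Fin.strictMono_cons.mpr ⟨Fin.lastCases (by simpa using hLU) (by simpa using hL),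
      strictMono_snoc ha hU⟩
  obtain ⟨c, hc, hroot⟩ := exists_isRoot_between_of_alternating hx (f := f) <|
    Fin.cases (by simpa [hdeg] using hLpos) <| Fin.lastCases
      (by simpa [Even.neg_one_pow ⟨m + 1, rfl⟩] using hUpos)
      fun i ↦ by simpa [add_add_add_comm m 1, pow_add] using hsign i
  have hac : StrictlyInterlaces a c := fun i ↦ ⟨by
    simpa [← Fin.succ_castSucc] using (hc i.castSucc).2, by simpa using (hc i.succ).1⟩
  exact ⟨c, ⟨hdeg, hlc, hac.strictMono_right, hroot⟩, hac⟩

theorem exists_hasSimpleRoots_of_three_term {p q r s : ℝ[X]} {k : ℕ} {b : Fin k → ℝ}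
    {a : Fin (k + 1) → ℝ} (hp : HasSimpleRoots p b) (hq : HasSimpleRoots q a)
    (hba : StrictlyInterlaces b a) (hdeg : r.natDegree = k + 2) (hlc : 0 < r.leadingCoeff)
    {E F : ℝ} (hE : 0 < E) (hF : 0 < F) (hr : C E * r = s * q - C F * p) :
    ∃ c, HasSimpleRoots r c ∧ StrictlyInterlaces a c := by
  refine exists_hasSimpleRoots_of_alternating hdeg hlc hq.strictMono fun i ↦ ?_
  have hpi : 0 < (-1) ^ (k + (i : ℕ)) * p.eval (a i) :=
    hp.neg_one_pow_mul_eval_pos i.is_le (fun _ hl ↦ hba.lt_of_castSucc_lt hl)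
      fun _ hl ↦ hba.lt_of_le_castSucc hl
  have hri : E * r.eval (a i) = -(F * p.eval (a i)) := by
    simpa [(hq.isRoot i).eq_zero] using congrArg (eval (a i)) hr
  refine pos_of_mul_pos_right ?_ hE.le
  calc 0 < F * ((-1) ^ (k + (i : ℕ)) * p.eval (a i)) := mul_pos hF hpi
    _ = E * ((-1) ^ (k + 1 + (i : ℕ)) * r.eval (a i)) := by
      linear_combination (-1) ^ (k + (i : ℕ)) * hri

/-- The quotient `g_{M+2,D+1}(t) / t`, in the range `2 * D ≤ M`. It equals
`(-1) ^ D * P_D^{(-M-1,0)}(1 + 2t)` with `P` the Jacobi polynomial. Writing the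
coefficients as products of binomials avoids the `min` and the division of `gPoly`. -/
noncomputable def gPolyDivX (M D : ℕ) : ℝ[X] :=
  ∑ j ∈ Finset.range (D + 1), C (((M - j).choose D * D.choose j : ℕ) : ℝ) * X ^ j

namespace gPolyDivX

theorem coeff_eq_choose (M D j : ℕ) :
    (gPolyDivX M D).coeff j = ((M - j).choose D * D.choose j : ℕ) := by
  rw [gPolyDivX, finsetSum_coeff]
  simp only [coeff_C_mul_X_pow, Finset.sum_ite_eq, Finset.mem_range]
  split_ifs with h
  · rfl
  · simp [Nat.choose_eq_zero_of_lt (show D < j by omega)]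

theorem coeff_eq_zero {M D j : ℕ} (h : D < j) : (gPolyDivX M D).coeff j = 0 := by
  simp [coeff_eq_choose, Nat.choose_eq_zero_of_lt h]

theorem coeff_nonneg (M D j : ℕ) : 0 ≤ (gPolyDivX M D).coeff j := by
  rw [coeff_eq_choose]
  positivity

theorem coeff_pos {M D j : ℕ} (hj : j ≤ D) (hM : D + j ≤ M) : 0 < (gPolyDivX M D).coeff j := by
  rw [coeff_eq_choose]
  exact mod_cast Nat.mul_pos (Nat.choose_pos (by omega)) (Nat.choose_pos hj)

theorem natDegree_eq {M D : ℕ} (h : 2 * D ≤ M) : (gPolyDivX M D).natDegree = D :=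
  natDegree_eq_of_le_of_coeff_ne_zero
    (natDegree_le_iff_coeff_eq_zero.mpr fun _ ↦ coeff_eq_zero) (coeff_pos le_rfl (by omega)).ne'

theorem leadingCoeff_pos {M D : ℕ} (h : 2 * D ≤ M) : 0 < (gPolyDivX M D).leadingCoeff := by
  rw [leadingCoeff, natDegree_eq h]
  exact coeff_pos le_rfl (by omega)

theorem neg_of_isRoot {M D : ℕ} (h : D ≤ M) {x : ℝ} (hx : (gPolyDivX M D).IsRoot x) : x < 0 :=
  neg_of_isRoot_of_coeff_nonneg (coeff_nonneg M D) (coeff_pos D.zero_le h) hx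

theorem coeff_eq_factorial {M D j a b : ℕ} (hD : j + a = D) (hM : D + j + b = M) :
    (gPolyDivX M D).coeff j = (M - j).factorial / (a.factorial * b.factorial * j.factorial) := by
  subst hD hM
  have hMD := Nat.add_choose_mul_factorial_mul_factorial (j + a) b
  have hDj := Nat.add_choose_mul_factorial_mul_factorial j a
  rw [← Nat.choose_symm_add] at hMD hDj
  rw [coeff_eq_choose, eq_div_iff (by positivity), show j + a + j + b - j = j + a + b by omega,
    ← hMD, ← hDj]
  push_cast
  ring

-- Over the common denominator `a! b! j!`, coefficients with neighbouring `D` differ by falling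
-- factorials, which vanish exactly where the coefficient does: identities between such coefficients
-- need no boundary cases.
theorem coeff_eq_descFactorial {M D j a b k l : ℕ} (hD : j + a = D + k) (hM : D + j + b = M + l) :
    (gPolyDivX M D).coeff j = a.descFactorial k * b.descFactorial l *
      ((M - j).factorial / (a.factorial * b.factorial * j.factorial)) := by
  rcases lt_or_ge a k with hak | hka
  · rw [coeff_eq_zero (by omega), Nat.descFactorial_of_lt hak]
    simp
  rcases lt_or_ge b l with hbl | hlb
  · rw [coeff_eq_choose, Nat.choose_eq_zero_of_lt (by omega), Nat.descFactorial_of_lt hbl]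
    simp
  rw [coeff_eq_factorial (a := a - k) (b := b - l) (by omega) (by omega),
    ← Nat.factorial_mul_descFactorial hka, ← Nat.factorial_mul_descFactorial hlb]
  have ha : (a.descFactorial k : ℝ) ≠ 0 := mod_cast (Nat.descFactorial_pos.mpr hka).ne'
  have hb : (b.descFactorial l : ℝ) ≠ 0 := mod_cast (Nat.descFactorial_pos.mpr hlb).ne'
  push_cast
  field_simp

theorem coeff_X_mul_eq {M D j a b : ℕ} (hj : j ≤ M) (hD : j + a = D + 1)
    (hM : D + j + b = M + 1) :
    (X * gPolyDivX M D).coeff j = ((M : ℝ) - j + 1) * j *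
      ((M - j).factorial / (a.factorial * b.factorial * j.factorial)) := by
  cases j with
  | zero => simp
  | succ i =>
    rw [coeff_X_mul, coeff_eq_factorial (a := a) (b := b) (by omega) (by omega),
      show M - i = M - (i + 1) + 1 by omega, Nat.factorial_succ, Nat.factorial_succ i,
      Nat.cast_mul, Nat.cast_succ, Nat.cast_sub hj]
    push_cast
    field_simp

/-- The three-term recurrence of the Jacobi polynomials `P_D^{(-M-1,0)}(1 + 2t)`. -/
theorem recurrence {M D : ℕ} (h : 2 * (D + 1) ≤ M) :
    C (2 * ((D : ℝ) + 2) * (M - 1 - D) * (M - 1 - 2 * D)) * gPolyDivX M (D + 2) =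
      C ((M : ℝ) - 2 - 2 * D) *
          (C (((M : ℝ) - 3 - 2 * D) * (M - 1 - 2 * D)) * (2 * X + 1) + C (((M : ℝ) + 1) ^ 2)) *
        gPolyDivX M (D + 1) -
      C (2 * ((M : ℝ) - D) * (D + 1) * (M - 3 - 2 * D)) * gPolyDivX M D := by
  have hmiddle (A B : ℝ) : (C A * (2 * X + 1) + C B) * gPolyDivX M (D + 1) =
      C (2 * A) * (X * gPolyDivX M (D + 1)) + C (A + B) * gPolyDivX M (D + 1) := by
    simp only [map_add, map_mul, map_ofNat]
    ring
  rw [mul_assoc (C _) _ (gPolyDivX M (D + 1)), hmiddle]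
  ext j
  simp only [coeff_sub, coeff_add, coeff_C_mul]
  rcases lt_or_ge (D + 2) j with hj | hj
  · obtain ⟨i, rfl⟩ := Nat.exists_eq_add_one_of_ne_zero (Nat.ne_zero_of_lt hj)
    rw [coeff_X_mul]
    simp (discharger := omega) only [coeff_eq_zero, mul_zero, add_zero, sub_zero]
  obtain ⟨a, ha⟩ := Nat.exists_eq_add_of_le hj
  obtain ⟨b, hb⟩ := Nat.exists_eq_add_of_le (show D + j ≤ M by omega)
  have hX := coeff_X_mul_eq (M := M) (D := D + 1) (j := j) (a := a) (b := b) (by omega) (by omega)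
    (by omega)
  have h₂ := coeff_eq_descFactorial (M := M) (D := D + 2) (j := j) (a := a) (b := b) (k := 0)
    (l := 2) (by omega) (by omega)
  have h₁ := coeff_eq_descFactorial (M := M) (D := D + 1) (j := j) (a := a) (b := b) (k := 1)
    (l := 1) (by omega) (by omega)
  have h₀ := coeff_eq_descFactorial (M := M) (D := D) (j := j) (a := a) (b := b) (k := 2)
    (l := 0) (by omega) (by omega)
  have hD : (D : ℝ) = j + a - 2 := eq_sub_of_add_eq (mod_cast ha)
  have hM : (M : ℝ) = D + j + b := mod_cast hb
  simp only [Nat.descFactorial_zero, Nat.descFactorial_one, Nat.cast_one, one_mul, mul_one,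
    Nat.cast_descFactorial_two] at h₀ h₁ h₂
  rw [hX, h₀, h₁, h₂, hM, hD]
  ring

theorem exists_strictlyInterlaces {M D : ℕ} (h : 2 * (D + 1) ≤ M) :
    ∃ (b : Fin D → ℝ) (a : Fin (D + 1) → ℝ), HasSimpleRoots (gPolyDivX M D) b ∧
      HasSimpleRoots (gPolyDivX M (D + 1)) a ∧ StrictlyInterlaces b a := by
  induction D with
  | zero =>
    have hb : HasSimpleRoots (gPolyDivX M 0) (Fin.elim0 : Fin 0 → ℝ) :=
      ⟨natDegree_eq (by omega), leadingCoeff_pos (by omega), Subsingleton.strictMono _,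
        fun i ↦ i.elim0⟩
    obtain ⟨a, ha, hba⟩ := exists_hasSimpleRoots_of_alternating (natDegree_eq h)
      (leadingCoeff_pos h) hb.strictMono fun i ↦ i.elim0
    exact ⟨_, a, hb, ha, hba⟩
  | succ D ih =>
    obtain ⟨b, a, hb, ha, hba⟩ := ih (by omega)
    have hM : 2 * ((D : ℝ) + 2) ≤ M := mod_cast h
    have : (0 : ℝ) ≤ D := D.cast_nonneg
    have hE : 0 < 2 * ((D : ℝ) + 2) * (M - 1 - D) * (M - 1 - 2 * D) :=
      mul_pos (mul_pos (by linarith) (by linarith)) (by linarith)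
    have hF : 0 < 2 * ((M : ℝ) - D) * (D + 1) * (M - 3 - 2 * D) :=
      mul_pos (mul_pos (by linarith) (by linarith)) (by linarith)
    obtain ⟨c, hc, hac⟩ := exists_hasSimpleRoots_of_three_term hb ha hba (natDegree_eq h)
      (leadingCoeff_pos h) hE hF (recurrence (by omega))
    exact ⟨a, c, ha, hc, hac⟩

end gPolyDivX

theorem gPoly_eq_X_mul_gPolyDivX {M D : ℕ} (h : 2 * D ≤ M) :
    gPoly (M + 2) (D + 1) = X * gPolyDivX M D := by
  rw [gPoly, show min (D + 1) (M + 2 - (D + 1)) = D + 1 by omega,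
    ← Finset.Ico_add_one_right_eq_Icc, Finset.sum_Ico_eq_sum_range,
    (gPolyDivX M D).as_sum_range_C_mul_X_pow, gPolyDivX.natDegree_eq h, Finset.mul_sum]
  refine Finset.sum_congr rfl fun j hj ↦ ?_
  have hj : j ≤ D := Finset.mem_range_succ_iff.mp hj
  rw [gPolyDivX.coeff_eq_factorial (a := D - j) (b := M - D - j) (by omega) (by omega),
    show M + 2 - (1 + j) - 1 = M - j by omega, show D + 1 - (1 + j) = D - j by omega,
    show M + 2 - (D + 1) - (1 + j) = M - D - j by omega, Nat.add_sub_cancel_left]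
  ring

/-- For fixed `n ≥ 2` and every `1 ≤ d ≤ ⌊n/2⌋ - 1`, the polynomials `g_{n,d}` and
`g_{n,d+1}` are real-rooted and `g_{n,d} ⪯ g_{n,d+1}`; hence `{g_{n,d}(t)}_{d=1}^{⌊n/2⌋}`
is a generalized Sturm sequence. -/
theorem gPoly_sturm_fixed_n (n : ℕ) (hn : 2 ≤ n) (d : ℕ) (hd : 1 ≤ d) (hd2 : d ≤ n / 2 - 1) :
    RealRooted (gPoly n d) ∧ RealRooted (gPoly n (d + 1)) ∧
      Interlaces (gPoly n d) (gPoly n (d + 1)) := by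
  obtain ⟨D, rfl⟩ := Nat.exists_eq_add_of_le' hd
  obtain ⟨M, rfl⟩ := Nat.exists_eq_add_of_le' hn
  have hM : 2 * (D + 1) ≤ M := by omega
  obtain ⟨b, a, hb, ha, hba⟩ := gPolyDivX.exists_strictlyInterlaces hM
  have ha_neg (i : Fin (D + 1)) : a i < 0 := gPolyDivX.neg_of_isRoot (by omega) (ha.isRoot i)
  have hgg : Interlaces (gPoly (M + 2) (D + 1)) (gPoly (M + 2) (D + 1 + 1)) := by
    rw [gPoly_eq_X_mul_gPolyDivX (by omega), gPoly_eq_X_mul_gPolyDivX hM]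
    exact hb.interlaces_X_mul ha hba ha_neg
  exact ⟨hgg.1, hgg.2.1, hgg⟩
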